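/- Let A and B be finite-dimensional Hermitian matrices, let ω and Ω be sets of eigenvalues of A and B respectively with dist(ω, Ω) = δ > 0, and let P, Q be the orthogonal (spectral) projections of A and B onto the eigenspaces corresponding to ω and Ω. Then the operator X = P Q restricted appropriately solves the Sylvester equation X B_Ω − A_ω X = P (B − A) Q, and consequently δ·‖P Q‖ ≤ (π/2)·‖B − A‖. -/

import Mathlib

open Real Classical

/-- The spectral projection of a Hermitian matrix `A` associated with a set
`ω ⊆ ℝ`: `U diag(χ_ω(λᵢ)) U*`, where `A = U diag(λ) U*` is the spectral
decomposition of `A`. -/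
noncomputable def spectralProj {m : ℕ} {A : Matrix (Fin m) (Fin m) ℂ}
    (hA : A.IsHermitian) (ω : Set ℝ) : Matrix (Fin m) (Fin m) ℂ :=
  (hA.eigenvectorUnitary : Matrix (Fin m) (Fin m) ℂ) *
    Matrix.diagonal (fun i => if hA.eigenvalues i ∈ ω then (1 : ℂ) else 0) *
    star (hA.eigenvectorUnitary : Matrix (Fin m) (Fin m) ℂ)


lemma aux_coth (u : ℝ) (hu : 0 < u) :
    HasSum (fun n : ℕ => 2 * u / (u ^ 2 + ((n : ℝ) + 1) ^ 2))
      (π * (Real.cosh (π * u) / Real.sinh (π * u)) - 1 / u) := by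
  have hz : Complex.I * (u : ℂ) ∈ Complex.integerComplement := by
    apply UpperHalfPlane.coe_mem_integerComplement ⟨Complex.I * u, by simpa using hu⟩
  have h1 := (summable_cotTerm hz).hasSum
  have h2 := cot_series_rep' hz
  have e1 : (fun n : ℕ => cotTerm (Complex.I * u) n) =
      fun n : ℕ => (1 / (Complex.I * u - (n + 1)) + 1 / (Complex.I * u + (n + 1))) := by
    funext n; simp [cotTerm]
  rw [e1, ← h2] at h1
  have h3 := h1.mul_left Complex.I
  rw [← Complex.hasSum_ofReal]
  have hcongr : ∀ (f g : ℕ → ℂ) (a b : ℂ), HasSum f a → (∀ n, g n = f n) → b = a → HasSum g b := by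
    intro f g a b h h' h''
    rw [h'', funext h']
    exact h
  refine hcongr _ _ _ _ h3 ?_ ?_
  · intro n
    have ha : (Complex.I * u - (n + 1) : ℂ) ≠ 0 := by
      intro h
      have := congrArg Complex.im h
      simp at this; linarith
    have hb : (Complex.I * u + (n + 1) : ℂ) ≠ 0 := by
      intro h
      have := congrArg Complex.im h
      simp at this; linarith
    have hc : ((u : ℂ) ^ 2 + ((n : ℂ) + 1) ^ 2) ≠ 0 := by
      have : (u ^ 2 + ((n : ℝ) + 1) ^ 2) ≠ 0 := by positivity
      exact_mod_cast this
    push_cast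
    rw [div_add_div _ _ ha hb, mul_div_assoc', div_eq_div_iff hc (mul_ne_zero ha hb)]
    linear_combination (2 * u * (u ^ 2) - 2 * u * (u^2 + ((n:ℂ) + 1) ^ 2)) * Complex.I_sq
  · have hs : Complex.sinh (π * u) ≠ 0 := by
      have : Real.sinh (π * u) ≠ 0 := (Real.sinh_pos_iff.mpr (by positivity)).ne'
      exact_mod_cast this
    have hu' : (u : ℂ) ≠ 0 := by exact_mod_cast hu.ne'
    rw [show (π : ℂ) * (Complex.I * u) = (π * u) * Complex.I by ring, Complex.cot_eq_cos_div_sin,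
      Complex.cos_mul_I, Complex.sin_mul_I]
    push_cast
    field_simp

noncomputable def wN (N : ℕ) (u : ℝ) : ℝ :=
  ∑ k ∈ Finset.range N, 4 / π * (u / (u ^ 2 + (2 * (k : ℝ) + 1) ^ 2))

lemma wN_nonneg (N : ℕ) (u : ℝ) (hu : 0 < u) : 0 ≤ wN N u := by
  unfold wN; positivity

lemma wN_le (N : ℕ) (u : ℝ) (hu : 0 < u) :
    wN N u ≤ (1 - rexp (-(π * u))) / (1 + rexp (-(π * u))) := by
  have h1 := aux_coth u hu
  have h2 := aux_coth (u / 2) (by positivity)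
  have ho : Summable (fun k : ℕ => 2 * u / (u ^ 2 + (((2 * k : ℕ) : ℝ) + 1) ^ 2)) :=
    h1.summable.comp_injective (i := fun k : ℕ => 2 * k) (fun a b h => by simpa using h)
  have he : Summable (fun k : ℕ => 2 * u / (u ^ 2 + (((2 * k + 1 : ℕ) : ℝ) + 1) ^ 2)) :=
    h1.summable.comp_injective (i := fun k : ℕ => 2 * k + 1) (fun a b h => by simpa using h)
  have h3 := tsum_even_add_odd (f := fun n : ℕ => 2 * u / (u ^ 2 + ((n : ℝ) + 1) ^ 2)) ho he
  rw [h1.tsum_eq] at h3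
  have h4 : ∑' k : ℕ, 2 * u / (u ^ 2 + (((2 * k + 1 : ℕ) : ℝ) + 1) ^ 2)
      = (1 / 2) * (π * (Real.cosh (π * (u / 2)) / Real.sinh (π * (u / 2))) - 1 / (u / 2)) := by
    rw [← (h2.mul_left (1 / 2)).tsum_eq]
    congr 1; funext k
    push_cast
    field_simp
    ring
  rw [h4] at h3
  have h5 := ho.sum_le_tsum (Finset.range N) (fun i _ => by positivity)
  have h6 : wN N u = 2 / π * ∑ k ∈ Finset.range N, 2 * u / (u ^ 2 + (((2 * k : ℕ) : ℝ) + 1) ^ 2) := by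
    unfold wN
    rw [Finset.mul_sum]
    apply Finset.sum_congr rfl
    intro k _
    push_cast
    ring
  rw [h6]
  have hs : 0 < Real.sinh (π * (u / 2)) := Real.sinh_pos_iff.mpr (by positivity)
  have hcc : 0 < Real.cosh (π * (u / 2)) := Real.cosh_pos _
  have e2 : π * u = 2 * (π * (u / 2)) := by ring
  have hid : (1 - rexp (-(π * u))) / (1 + rexp (-(π * u))) =
      Real.sinh (π * (u / 2)) / Real.cosh (π * (u / 2)) := by
    rw [e2]
    generalize π * (u / 2) = x
    rw [Real.sinh_eq, Real.cosh_eq]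
    have : rexp (-(2 * x)) = rexp (-x) * rexp (-x) := by rw [← Real.exp_add]; ring_nf
    rw [this]
    have h : rexp x * rexp (-x) = 1 := by rw [← Real.exp_add]; simp
    have := Real.exp_pos x
    have := Real.exp_pos (-x)
    rw [div_eq_div_iff (by positivity) (by positivity)]
    linear_combination (rexp x * 0 - rexp (-x)) * h
  rw [hid]
  have h7 : 2 / π * ∑' k : ℕ, 2 * u / (u ^ 2 + (((2 * k : ℕ) : ℝ) + 1) ^ 2) =
      Real.sinh (π * (u / 2)) / Real.cosh (π * (u / 2)) := by
    have : ∑' k : ℕ, 2 * u / (u ^ 2 + (((2 * k : ℕ) : ℝ) + 1) ^ 2) = π * (Real.cosh (π * u) / Real.sinh (π * u)) - 1 / u - (1 / 2) * (π * (Real.cosh (π * (u / 2)) / Real.sinh (π * (u / 2))) - 1 / (u / 2)) := by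
      linarith
    rw [this, e2, Real.cosh_two_mul, Real.sinh_two_mul]
    field_simp
    ring
  rw [← h7]
  gcongr

lemma aux_abs_sin (u : ℝ) (hu : 0 < u) :
    MeasureTheory.IntegrableOn (fun t => |Real.sin t| * rexp (-(t * u))) (Set.Ioi 0) ∧
    ∫ t in Set.Ioi (0:ℝ), |Real.sin t| * rexp (-(t * u)) =
      (1 + rexp (-(π * u))) / (1 - rexp (-(π * u))) / (1 + u ^ 2) := by
  have hI : MeasureTheory.IntegrableOn (fun t => |Real.sin t| * rexp (-(t * u))) (Set.Ioi 0) := by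
    have h := integrableOn_exp_mul_Ioi (a := -u) (by linarith) 0
    refine MeasureTheory.Integrable.mono' h ?_ ?_
    · exact (by fun_prop : Continuous fun t : ℝ => |Real.sin t| * rexp (-(t * u))).aestronglyMeasurable
    · filter_upwards with t
      rw [Real.norm_eq_abs, abs_mul, abs_abs, Real.abs_exp, show -u * t = -(t * u) by ring]
      exact mul_le_of_le_one_left (Real.exp_pos _).le (Real.abs_sin_le_one t)
  refine ⟨hI, ?_⟩
  set J := ∫ t in Set.Ioi (0:ℝ), |Real.sin t| * rexp (-(t * u)) with hJ
  have hsplit := intervalIntegral.integral_interval_add_Ioi (a := 0) (b := π) hI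
    (hI.mono_set (Set.Ioi_subset_Ioi pi_pos.le))
  have hshift : ∫ t in Set.Ioi π, |Real.sin t| * rexp (-(t * u)) = rexp (-(π * u)) * J := by
    have hm := (MeasureTheory.measurePreserving_add_right MeasureTheory.volume π).setIntegral_preimage_emb
      (measurableEmbedding_addRight π) (fun t => |Real.sin t| * rexp (-(t * u))) (Set.Ioi π)
    rw [show (fun x : ℝ => x + π) ⁻¹' (Set.Ioi π) = Set.Ioi 0 by ext x; simp] at hm
    rw [← hm, hJ, ← MeasureTheory.integral_const_mul]
    congr 1; funext t
    rw [Real.sin_add_pi, abs_neg, show -((t + π) * u) = -(π * u) + -(t * u) by ring, Real.exp_add]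
    ring
  have hK : ∫ t in (0:ℝ)..π, |Real.sin t| * rexp (-(t * u)) = (1 + rexp (-(π * u))) / (1 + u ^ 2) := by
    have h0 : ∫ t in (0:ℝ)..π, |Real.sin t| * rexp (-(t * u)) = ∫ t in (0:ℝ)..π, Real.sin t * rexp (-(t * u)) := by
      apply intervalIntegral.integral_congr
      intro t ht
      rw [Set.uIcc_of_le pi_pos.le] at ht
      simp only
      rw [abs_of_nonneg (Real.sin_nonneg_of_mem_Icc ht)]
    rw [h0, intervalIntegral.integral_eq_sub_of_hasDerivAt
      (f := fun t => -(Real.cos t + u * Real.sin t) * rexp (-(t * u)) / (1 + u ^ 2))]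
    · simp; field_simp; ring
    · intro t _
      have : HasDerivAt (fun t => -(Real.cos t + u * Real.sin t) * rexp (-(t * u)) / (1 + u ^ 2))
        ((-(-Real.sin t + u * Real.cos t) * rexp (-(t * u)) + -(Real.cos t + u * Real.sin t) * (rexp (-(t * u)) * (-(1 * u)))) / (1 + u ^ 2)) t := by
        refine HasDerivAt.div_const (HasDerivAt.mul ?_ ?_) _
        · exact ((Real.hasDerivAt_cos t).add ((Real.hasDerivAt_sin t).const_mul u)).neg
        · exact (((hasDerivAt_id t).mul_const u).neg).exp
      refine this.congr_deriv ?_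
      field_simp
      ring
    · exact (by fun_prop : Continuous fun t : ℝ => Real.sin t * rexp (-(t * u))).intervalIntegrable _ _
  rw [hshift, hK] at hsplit
  have he : rexp (-(π * u)) < 1 := by
    rw [Real.exp_lt_one_iff]; have := mul_pos pi_pos hu; linarith
  have h1 : 0 < 1 - rexp (-(π * u)) := by linarith
  have h2 : 0 < 1 + u ^ 2 := by positivity
  have hsplit' : J * (1 - rexp (-(π * u))) = (1 + rexp (-(π * u))) / (1 + u ^ 2) := by
    rw [← hJ] at hsplit
    linarith
  rw [div_right_comm, eq_div_iff h1.ne', hsplit']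

lemma aux_cos (u : ℝ) (hu : 0 < u) (c : ℝ) :
    MeasureTheory.IntegrableOn (fun t => Real.cos (c * t) * rexp (-(t * u))) (Set.Ioi 0) ∧
    ∫ t in Set.Ioi (0:ℝ), Real.cos (c * t) * rexp (-(t * u)) = u / (u ^ 2 + c ^ 2) := by
  have hre : ((-u : ℂ) + c * Complex.I).re < 0 := by simpa using hu
  have h1 := integrableOn_exp_mul_complex_Ioi hre 0
  have h2 := integral_exp_mul_complex_Ioi hre 0
  have e : ∀ t : ℝ, RCLike.re (Complex.exp (((-u : ℂ) + c * Complex.I) * t)) =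
      Real.cos (c * t) * rexp (-(t * u)) := by
    intro t
    simp only [RCLike.re_to_complex]
    rw [Complex.exp_re]
    simp
    ring_nf
  constructor
  · have := h1.re
    simp only [e] at this
    exact this
  · have := integral_re h1
    simp only [e] at this
    rw [this, h2]
    simp [Complex.div_re, Complex.normSq_apply]
    field_simp

lemma aux_rat (k c : ℝ) (hk : 0 < k) (hc : 0 ≤ c) :
    MeasureTheory.IntegrableOn (fun u : ℝ => u / (u ^ 2 + k ^ 2) * (u / (u ^ 2 + c ^ 2))) (Set.Ioi 0) ∧
    ∫ u in Set.Ioi (0:ℝ), u / (u ^ 2 + k ^ 2) * (u / (u ^ 2 + c ^ 2)) = π / (2 * (k + c)) := by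
  have hat : ∀ a : ℝ, 0 < a → ∀ x : ℝ, HasDerivAt (fun u => Real.arctan (u / a)) (a / (x ^ 2 + a ^ 2)) x := by
    intro a ha x
    have := ((hasDerivAt_id x).div_const a).arctan
    refine this.congr_deriv ?_
    simp only [id]
    field_simp
    ring
  have hlim : ∀ a : ℝ, 0 < a → Filter.Tendsto (fun u : ℝ => Real.arctan (u / a)) Filter.atTop (nhds (π / 2)) := by
    intro a ha
    exact (Real.tendsto_arctan_atTop.mono_right nhdsWithin_le_nhds).comp (Filter.tendsto_id.atTop_div_const ha)
  have hpos : ∀ x ∈ Set.Ioi (0:ℝ), 0 ≤ x / (x ^ 2 + k ^ 2) * (x / (x ^ 2 + c ^ 2)) := by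
    intro x hx
    have : 0 < x := hx
    positivity
  suffices H : ∃ g : ℝ → ℝ, ContinuousWithinAt g (Set.Ici 0) 0 ∧ g 0 = 0 ∧
      (∀ x ∈ Set.Ioi (0:ℝ), HasDerivAt g (x / (x ^ 2 + k ^ 2) * (x / (x ^ 2 + c ^ 2))) x) ∧
      Filter.Tendsto g Filter.atTop (nhds (π / (2 * (k + c)))) by
    obtain ⟨g, hg1, hg0, hg2, hg3⟩ := H
    refine ⟨MeasureTheory.integrableOn_Ioi_deriv_of_nonneg hg1 hg2 hpos hg3, ?_⟩
    rw [MeasureTheory.integral_Ioi_of_hasDerivAt_of_nonneg hg1 hg2 hpos hg3, hg0, sub_zero]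
  rcases hc.eq_or_lt with rfl | hc
  · refine ⟨fun u => Real.arctan (u / k) / k, ?_, by simp, ?_, ?_⟩
    · exact ((hat k hk 0).div_const k).continuousAt.continuousWithinAt
    · intro x hx
      have : 0 < x := hx
      refine ((hat k hk x).div_const k).congr_deriv ?_
      field_simp
      simp
    · convert (hlim k hk).div_const k using 2
      field_simp
      simp
  by_cases hkc : k = c
  · subst hkc
    refine ⟨fun u => Real.arctan (u / k) / (2 * k) - u / (2 * (u ^ 2 + k ^ 2)), ?_, by simp, ?_, ?_⟩
    · refine ((hat k hk 0).div_const _).continuousAt.continuousWithinAt.sub ?_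
      refine ContinuousAt.continuousWithinAt ?_
      refine ContinuousAt.div (by fun_prop) (by fun_prop) (by positivity)
    · intro x hx
      have hx : 0 < x := hx
      have h2 : HasDerivAt (fun u : ℝ => u / (2 * (u ^ 2 + k ^ 2)))
          ((1 * (2 * (x ^ 2 + k ^ 2)) - x * (2 * (2 * x))) / (2 * (x ^ 2 + k ^ 2)) ^ 2) x := by
        refine HasDerivAt.div (hasDerivAt_id x) ?_ (by positivity)
        convert ((hasDerivAt_pow 2 x).add_const (k ^ 2)).const_mul 2 using 1
        simp
      refine HasDerivAt.congr_deriv (((hat k hk x).div_const (2 * k)).sub h2) ?_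
      field_simp
      ring
    · have h2 : Filter.Tendsto (fun u : ℝ => u / (2 * (u ^ 2 + k ^ 2))) Filter.atTop (nhds 0) := by
        refine squeeze_zero' (g := fun u : ℝ => u⁻¹) ?_ ?_ tendsto_inv_atTop_zero
        · filter_upwards [Filter.eventually_gt_atTop 0] with u hu
          positivity
        · filter_upwards [Filter.eventually_gt_atTop 0] with u hu
          rw [div_le_iff₀ (by positivity)]
          field_simp
          nlinarith [sq_nonneg k, sq_nonneg u]
      convert ((hlim k hk).div_const (2 * k)).sub h2 using 2
      field_simp
      ring
  · have hne : k - c ≠ 0 := sub_ne_zero.mpr hkc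
    have hne2 : k ^ 2 - c ^ 2 ≠ 0 := by
      rw [show k ^ 2 - c ^ 2 = (k - c) * (k + c) by ring]
      exact mul_ne_zero hne (by positivity)
    refine ⟨fun u => (k * Real.arctan (u / k) - c * Real.arctan (u / c)) / (k ^ 2 - c ^ 2), ?_, by simp, ?_, ?_⟩
    · exact ((((hat k hk 0).const_mul k).sub ((hat c hc 0).const_mul c)).div_const _).continuousAt.continuousWithinAt
    · intro x hx
      have hx : 0 < x := hx
      refine HasDerivAt.congr_deriv ((((hat k hk x).const_mul k).sub ((hat c hc x).const_mul c)).div_const (k ^ 2 - c ^ 2)) ?_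
      field_simp
      ring
    · convert (((hlim k hk).const_mul k).sub ((hlim c hc).const_mul c)).div_const (k ^ 2 - c ^ 2) using 2
      field_simp
      ring

lemma wN_cont (N : ℕ) : Continuous (wN N) := by
  unfold wN
  refine continuous_finsetSum _ (fun k _ => continuous_const.mul ?_)
  exact continuous_id.div (by fun_prop) (fun x => by positivity)

noncomputable def Fker (N : ℕ) (p : ℝ × ℝ) : ℝ := Real.sin p.1 * rexp (-(p.1 * p.2)) * wN N p.2

lemma Fker_cont (N : ℕ) : Continuous (Fker N) := by
  unfold Fker
  have := wN_cont N
  fun_prop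

noncomputable def muQ : MeasureTheory.Measure (ℝ × ℝ) :=
  (MeasureTheory.volume.restrict (Set.Ioi (0:ℝ))).prod (MeasureTheory.volume.restrict (Set.Ioi (0:ℝ)))

lemma Fker_norm_inner (N : ℕ) (u : ℝ) (hu : 0 < u) :
    ∫ t in Set.Ioi (0:ℝ), ‖Fker N (t, u)‖ =
      wN N u * ((1 + rexp (-(π * u))) / (1 - rexp (-(π * u))) / (1 + u ^ 2)) := by
  rw [← (aux_abs_sin u hu).2, ← MeasureTheory.integral_const_mul]
  congr 1; funext t
  simp only [Fker, Real.norm_eq_abs, abs_mul, Real.abs_exp, abs_of_nonneg (wN_nonneg N u hu)]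
  ring

lemma Fker_inner_le (N : ℕ) (u : ℝ) (hu : 0 < u) :
    wN N u * ((1 + rexp (-(π * u))) / (1 - rexp (-(π * u))) / (1 + u ^ 2)) ≤ (1 + u ^ 2)⁻¹ := by
  have he : rexp (-(π * u)) < 1 := by
    rw [Real.exp_lt_one_iff]; have := mul_pos pi_pos hu; linarith
  have h1 : 0 < 1 - rexp (-(π * u)) := by linarith
  have h2 : 0 < 1 + rexp (-(π * u)) := by positivity
  have h := wN_le N u hu
  rw [le_div_iff₀ h2] at h
  have : wN N u * ((1 + rexp (-(π * u))) / (1 - rexp (-(π * u)))) ≤ 1 := by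
    rw [← mul_div_assoc, div_le_one h1]; exact h
  rw [← mul_div_assoc, div_eq_mul_inv]
  exact mul_le_of_le_one_left (by positivity) this

lemma Fker_int (N : ℕ) : MeasureTheory.Integrable (Fker N) muQ ∧ ∫ p, ‖Fker N p‖ ∂muQ ≤ π / 2 := by
  have hcauchy : MeasureTheory.IntegrableOn (fun u : ℝ => (1 + u ^ 2)⁻¹) (Set.Ioi 0) :=
    integrable_inv_one_add_sq.integrableOn
  have hae : (fun u => ∫ t in Set.Ioi (0:ℝ), ‖Fker N (t, u)‖) =ᵐ[MeasureTheory.volume.restrict (Set.Ioi (0:ℝ))]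
      fun u => wN N u * ((1 + rexp (-(π * u))) / (1 - rexp (-(π * u))) / (1 + u ^ 2)) := by
    filter_upwards [MeasureTheory.ae_restrict_mem measurableSet_Ioi] with u hu
    exact Fker_norm_inner N u hu
  have hint2 : MeasureTheory.IntegrableOn (fun u => wN N u * ((1 + rexp (-(π * u))) / (1 - rexp (-(π * u))) / (1 + u ^ 2))) (Set.Ioi 0) := by
    refine MeasureTheory.Integrable.mono' hcauchy ?_ ?_
    · have := (wN_cont N).measurable
      exact Measurable.aestronglyMeasurable (by fun_prop)
    · filter_upwards [MeasureTheory.ae_restrict_mem measurableSet_Ioi] with u hu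
      rw [Real.norm_of_nonneg]
      · exact Fker_inner_le N u hu
      · rw [← Fker_norm_inner N u hu]
        positivity
  have hI : MeasureTheory.Integrable (Fker N) muQ := by
    unfold muQ
    rw [MeasureTheory.integrable_prod_iff' (Fker_cont N).aestronglyMeasurable]
    constructor
    · filter_upwards [MeasureTheory.ae_restrict_mem measurableSet_Ioi] with u hu
      refine MeasureTheory.Integrable.mono' ((aux_abs_sin u hu).1.mul_const (wN N u)) ?_ ?_
      · have := Fker_cont N
        exact (by fun_prop : Continuous fun x => Fker N (x, u)).aestronglyMeasurable
      · filter_upwards with t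
        simp only [Fker, Real.norm_eq_abs, abs_mul, Real.abs_exp, abs_of_nonneg (wN_nonneg N u hu)]
        exact le_rfl
    · exact hint2.congr hae.symm
  refine ⟨hI, ?_⟩
  have h1 := hI.norm
  unfold muQ at h1 ⊢
  rw [MeasureTheory.integral_prod_symm _ h1, MeasureTheory.integral_congr_ae hae]
  have : π / 2 = ∫ u in Set.Ioi (0:ℝ), (1 + u ^ 2)⁻¹ := by
    rw [integral_Ioi_inv_one_add_sq]; simp
  rw [this]
  exact MeasureTheory.setIntegral_mono_on hint2 hcauchy measurableSet_Ioi (fun u hu => Fker_inner_le N u hu)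

lemma Fker_mult (N : ℕ) (s : ℝ) (hs : 1 ≤ s) :
    ∫ p, Fker N p * Real.sin (s * p.1) ∂muQ = 1 / s - 1 / (s + 2 * N) := by
  have hI : MeasureTheory.Integrable (fun p : ℝ × ℝ => Fker N p * Real.sin (s * p.1)) muQ := by
    refine MeasureTheory.Integrable.mono' (Fker_int N).1.norm ?_ ?_
    · have := Fker_cont N
      exact (by fun_prop : Continuous fun p : ℝ × ℝ => Fker N p * Real.sin (s * p.1)).aestronglyMeasurable
    · filter_upwards with p
      rw [norm_mul]
      exact mul_le_of_le_one_right (norm_nonneg _) (Real.abs_sin_le_one _)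
  unfold muQ at hI ⊢
  rw [MeasureTheory.integral_prod_symm _ hI]
  have hin : ∀ u ∈ Set.Ioi (0:ℝ), ∫ t in Set.Ioi (0:ℝ), Fker N (t, u) * Real.sin (s * t) =
      ∑ k ∈ Finset.range N, (2 / π) * (u / (u ^ 2 + (2 * (k : ℝ) + 1) ^ 2) * (u / (u ^ 2 + (s - 1) ^ 2))
        - u / (u ^ 2 + (2 * (k : ℝ) + 1) ^ 2) * (u / (u ^ 2 + (s + 1) ^ 2))) := by
    intro u hu
    have h1 := aux_cos u hu (s - 1)
    have h2 := aux_cos u hu (s + 1)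
    have e : ∀ t : ℝ, Fker N (t, u) * Real.sin (s * t) =
        wN N u / 2 * (Real.cos ((s - 1) * t) * rexp (-(t * u)) - Real.cos ((s + 1) * t) * rexp (-(t * u))) := by
      intro t
      rw [show (s - 1) * t = s * t - t by ring, show (s + 1) * t = s * t + t by ring,
        Real.cos_sub, Real.cos_add]
      simp only [Fker]
      ring
    simp_rw [e]
    rw [MeasureTheory.integral_const_mul, MeasureTheory.integral_sub h1.1 h2.1, h1.2, h2.2, wN,
      Finset.sum_div, Finset.sum_mul]
    apply Finset.sum_congr rfl
    intro k _
    ring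
  rw [MeasureTheory.setIntegral_congr_fun measurableSet_Ioi hin]
  have hr1 := fun k : ℕ => aux_rat (2 * k + 1) (s - 1) (by positivity) (by linarith)
  have hr2 := fun k : ℕ => aux_rat (2 * k + 1) (s + 1) (by positivity) (by linarith)
  rw [MeasureTheory.integral_finsetSum]
  swap
  · intro k _
    exact ((hr1 k).1.sub (hr2 k).1).const_mul _
  have : ∀ k : ℕ, ∫ u in Set.Ioi (0:ℝ), (2 / π) * (u / (u ^ 2 + (2 * (k : ℝ) + 1) ^ 2) * (u / (u ^ 2 + (s - 1) ^ 2))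
        - u / (u ^ 2 + (2 * (k : ℝ) + 1) ^ 2) * (u / (u ^ 2 + (s + 1) ^ 2))) =
      1 / (s + 2 * k) - 1 / (s + 2 * (k + 1 : ℕ)) := by
    intro k
    rw [MeasureTheory.integral_const_mul, MeasureTheory.integral_sub (hr1 k).1 (hr2 k).1, (hr1 k).2, (hr2 k).2]
    push_cast
    rw [show (2 * (k:ℝ) + 1 + (s - 1)) = s + 2 * k by ring,
      show (2 * (k:ℝ) + 1 + (s + 1)) = s + 2 * (k + 1) by ring]
    have : 0 < s + 2 * (k:ℝ) := by positivity
    have : 0 < s + 2 * ((k:ℝ) + 1) := by positivity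
    have := pi_pos
    field_simp
  simp_rw [this]
  rw [Finset.sum_range_sub' (fun k : ℕ => 1 / (s + 2 * (k : ℝ)))]
  simp

/-- The multiplier, also for negative `s`. -/
lemma Fker_tendsto (s : ℝ) (hs : 1 ≤ |s|) :
    Filter.Tendsto (fun N => ∫ p, Fker N p * Real.sin (s * p.1) ∂muQ) Filter.atTop (nhds (1 / s)) := by
  have key : ∀ r : ℝ, 1 ≤ r →
      Filter.Tendsto (fun N => ∫ p, Fker N p * Real.sin (r * p.1) ∂muQ) Filter.atTop (nhds (1 / r)) := by
    intro r hr
    simp_rw [Fker_mult _ r hr]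
    have h1 : Filter.Tendsto (fun N : ℕ => r + 2 * (N : ℝ)) Filter.atTop Filter.atTop :=
      Filter.tendsto_atTop_add_const_left _ _
        (tendsto_natCast_atTop_atTop.const_mul_atTop (by norm_num))
    simpa using (tendsto_const_nhds (x := 1 / r)).sub h1.inv_tendsto_atTop
  rcases le_abs.mp hs with h | h
  · exact key s h
  · have := (key (-s) h).neg
    simp only [← MeasureTheory.integral_neg] at this
    convert this using 2
    · congr 1; funext p
      rw [neg_mul, Real.sin_neg]; ring
    · rw [one_div, one_div, inv_neg, neg_neg]

section
open scoped Matrix.Norms.L2Operator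

lemma schur_t {m : ℕ} (C : Matrix (Fin m) (Fin m) ℂ) (a b : Fin m → ℝ) :
    ‖(Matrix.of fun i j => ((Real.sin (b j - a i) : ℝ) : ℂ) * C i j)‖ ≤ ‖C‖ := by
  have hE : ∀ x : Fin m → ℝ, ‖(Matrix.diagonal fun i => Complex.exp (x i * Complex.I) : Matrix (Fin m) (Fin m) ℂ)‖ ≤ 1 := by
    intro x
    rw [Matrix.l2_opNorm_diagonal]
    refine (pi_norm_le_iff_of_nonneg zero_le_one).mpr (fun i => ?_)
    rw [Complex.norm_exp_ofReal_mul_I]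
  have e : (Matrix.of fun i j => ((Real.sin (b j - a i) : ℝ) : ℂ) * C i j) =
      (-Complex.I / 2) • (
        (Matrix.diagonal fun i => Complex.exp (((-a i : ℝ) : ℂ) * Complex.I)) * C *
          (Matrix.diagonal fun i => Complex.exp (((b i : ℝ) : ℂ) * Complex.I))
        - (Matrix.diagonal fun i => Complex.exp (((a i : ℝ) : ℂ) * Complex.I)) * C *
          (Matrix.diagonal fun i => Complex.exp (((-b i : ℝ) : ℂ) * Complex.I))) := by
    ext i j
    simp only [Matrix.of_apply, Matrix.smul_apply, Matrix.sub_apply, Matrix.mul_diagonal,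
      Matrix.diagonal_mul, smul_eq_mul]
    rw [Complex.ofReal_sin, Complex.sin]
    have e1 : Complex.exp (((b j - a i : ℝ) : ℂ) * Complex.I) =
      Complex.exp (((-a i : ℝ) : ℂ) * Complex.I) * Complex.exp (((b j : ℝ) : ℂ) * Complex.I) := by
      rw [← Complex.exp_add]; push_cast; ring_nf
    have e2 : Complex.exp (-((b j - a i : ℝ) : ℂ) * Complex.I) =
      Complex.exp (((a i : ℝ) : ℂ) * Complex.I) * Complex.exp (((-b j : ℝ) : ℂ) * Complex.I) := by
      rw [← Complex.exp_add]; push_cast; ring_nf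
    rw [e1, e2]
    ring
  have hb : ∀ x y : Fin m → ℝ, ‖(Matrix.diagonal fun i => Complex.exp (x i * Complex.I)) * C *
      (Matrix.diagonal fun i => Complex.exp (y i * Complex.I))‖ ≤ ‖C‖ := by
    intro x y
    calc _ ≤ 1 * ‖C‖ * 1 := by
          refine (Matrix.l2_opNorm_mul _ _).trans ?_
          refine mul_le_mul ((Matrix.l2_opNorm_mul _ _).trans ?_) (hE y) (norm_nonneg _) (by positivity)
          exact mul_le_mul_of_nonneg_right (hE x) (norm_nonneg _)
      _ = ‖C‖ := by ring
  rw [e, norm_smul]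
  have h1 := hb (fun i => -a i) b
  have h2 := hb a (fun i => -b i)
  have h3 := norm_sub_le ((Matrix.diagonal fun i => Complex.exp (((-a i : ℝ) : ℂ) * Complex.I)) * C *
          (Matrix.diagonal fun i => Complex.exp (((b i : ℝ) : ℂ) * Complex.I)))
        ((Matrix.diagonal fun i => Complex.exp (((a i : ℝ) : ℂ) * Complex.I)) * C *
          (Matrix.diagonal fun i => Complex.exp (((-b i : ℝ) : ℂ) * Complex.I)))
  have h4 : ‖-Complex.I / 2‖ = 1 / 2 := by simp
  rw [h4]
  linarith

lemma sylvester_bound {m : ℕ} (C Z : Matrix (Fin m) (Fin m) ℂ) (a b : Fin m → ℝ) (δ : ℝ) (hδ : 0 < δ)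
    (h : ∀ i j, (Z i j = 0 ∧ C i j = 0) ∨ (δ ≤ |b j - a i| ∧ C i j = ((b j - a i : ℝ) : ℂ) * Z i j)) :
    δ * ‖Z‖ ≤ π / 2 * ‖C‖ := by
  let S : ℝ → Matrix (Fin m) (Fin m) ℂ := fun t =>
    Matrix.of fun i j => ((Real.sin ((b j - a i) / δ * t) : ℝ) : ℂ) * C i j
  have hS : ∀ t, ‖S t‖ ≤ ‖C‖ := by
    intro t
    have := schur_t C (fun i => a i / δ * t) (fun j => b j / δ * t)
    have e : S t = (Matrix.of fun i j => ((Real.sin (b j / δ * t - a i / δ * t) : ℝ) : ℂ) * C i j) := by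
      ext i j
      simp only [S, Matrix.of_apply]
      rw [show (b j - a i) / δ * t = b j / δ * t - a i / δ * t by ring]
    rw [e]
    exact this
  have hSc : Continuous S := by
    refine continuous_matrix (fun i j => ?_)
    simp only [S, Matrix.of_apply]
    fun_prop
  have hint : ∀ N, MeasureTheory.Integrable (fun p => Fker N p • S p.1) muQ := by
    intro N
    refine MeasureTheory.Integrable.mono' ((Fker_int N).1.norm.mul_const ‖C‖) ?_ ?_
    · have := Fker_cont N
      exact (by fun_prop : Continuous fun p : ℝ × ℝ => Fker N p • S p.1).aestronglyMeasurable
    · filter_upwards with p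
      rw [norm_smul]
      exact mul_le_mul_of_nonneg_left (hS _) (norm_nonneg _)
  have hbd : ∀ N, ‖∫ p, Fker N p • S p.1 ∂muQ‖ ≤ π / 2 * ‖C‖ := by
    intro N
    refine (MeasureTheory.norm_integral_le_of_norm_le ((Fker_int N).1.norm.mul_const ‖C‖) ?_).trans ?_
    · filter_upwards with p
      rw [norm_smul]
      exact mul_le_mul_of_nonneg_left (hS _) (norm_nonneg _)
    · rw [MeasureTheory.integral_mul_const]
      exact mul_le_mul_of_nonneg_right (Fker_int N).2 (norm_nonneg _)
  have hent : ∀ N i j, (∫ p, Fker N p • S p.1 ∂muQ) i j =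
      ((∫ p, Fker N p * Real.sin ((b j - a i) / δ * p.1) ∂muQ : ℝ) : ℂ) * C i j := by
    intro N i j
    let L : Matrix (Fin m) (Fin m) ℂ →L[ℝ] ℂ := LinearMap.toContinuousLinearMap (Matrix.entryLinearMap ℝ ℂ i j)
    have hL : ∀ M, L M = M i j := fun M => rfl
    rw [← hL (∫ p, Fker N p • S p.1 ∂muQ), ← L.integral_comp_comm (hint N), ← integral_complex_ofReal, ← MeasureTheory.integral_mul_const]
    congr 1; funext p
    rw [hL]
    simp [S, mul_assoc]
  have hlim : Filter.Tendsto (fun N => ∫ p, Fker N p • S p.1 ∂muQ) Filter.atTop (nhds ((δ : ℂ) • Z)) := by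
    refine tendsto_pi_nhds.mpr (fun i => tendsto_pi_nhds.mpr (fun j => ?_))
    simp_rw [hent]
    rw [Matrix.smul_apply, smul_eq_mul]
    rcases h i j with ⟨h1, h2⟩ | ⟨h1, h2⟩
    · rw [h1, h2]; simp
    · have hs : 1 ≤ |(b j - a i) / δ| := by
        rw [abs_div, abs_of_pos hδ, one_le_div hδ]; exact h1
      have hne : b j - a i ≠ 0 := by
        intro h0; rw [h0, abs_zero] at h1; linarith
      have ht := ((Complex.continuous_ofReal.tendsto _).comp (Fker_tendsto _ hs)).mul_const (C i j)
      have e : ((1 / ((b j - a i) / δ) : ℝ) : ℂ) * C i j = δ * Z i j := by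
        rw [h2, ← mul_assoc, ← Complex.ofReal_mul]
        congr 2
        field_simp
      rw [e] at ht
      exact ht
  have := le_of_tendsto hlim.norm (Filter.Eventually.of_forall hbd)
  rwa [norm_smul, Complex.norm_real, Real.norm_of_nonneg hδ.le] at this

end

section
open scoped Matrix.Norms.L2Operator

lemma norm_unitary_le {m : ℕ} (U : Matrix (Fin m) (Fin m) ℂ) (hU : star U * U = 1) : ‖U‖ ≤ 1 := by
  have h := CStarRing.norm_star_mul_self (x := U)
  rw [hU] at h
  have h1 : ‖(1 : Matrix (Fin m) (Fin m) ℂ)‖ ≤ 1 := by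
    rw [← Matrix.diagonal_one, Matrix.l2_opNorm_diagonal]
    exact (pi_norm_le_iff_of_nonneg zero_le_one).mpr (fun i => by simp)
  nlinarith [norm_nonneg U]

lemma norm_triple_le {m : ℕ} (X Y Z : Matrix (Fin m) (Fin m) ℂ) (hX : ‖X‖ ≤ 1) (hZ : ‖Z‖ ≤ 1) :
    ‖X * Y * Z‖ ≤ ‖Y‖ := by
  calc _ ≤ 1 * ‖Y‖ * 1 := by
        refine (Matrix.l2_opNorm_mul _ _).trans ?_
        refine mul_le_mul ((Matrix.l2_opNorm_mul _ _).trans ?_) hZ (norm_nonneg _) (by positivity)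
        exact mul_le_mul_of_nonneg_right hX (norm_nonneg _)
    _ = ‖Y‖ := by ring

lemma norm_ind_le {m : ℕ} (p : Fin m → Prop) :
    ‖(Matrix.diagonal (fun i => if p i then (1 : ℂ) else 0) : Matrix (Fin m) (Fin m) ℂ)‖ ≤ 1 := by
  rw [Matrix.l2_opNorm_diagonal]
  refine (pi_norm_le_iff_of_nonneg zero_le_one).mpr (fun i => ?_)
  split_ifs <;> simp

lemma abstract_bound {m : ℕ} (U V DA DB E F A B P Q : Matrix (Fin m) (Fin m) ℂ) (a b : Fin m → ℝ)
    (p q : Fin m → Prop)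
    (hU1 : star U * U = 1) (hU2 : U * star U = 1) (hV1 : star V * V = 1) (hV2 : V * star V = 1)
    (hDA : DA = Matrix.diagonal (fun i => (a i : ℂ))) (hDB : DB = Matrix.diagonal (fun i => (b i : ℂ)))
    (hE : E = Matrix.diagonal (fun i => if p i then (1 : ℂ) else 0))
    (hF : F = Matrix.diagonal (fun i => if q i then (1 : ℂ) else 0))
    (hA : A = U * DA * star U) (hB : B = V * DB * star V)
    (hP : P = U * E * star U) (hQ : Q = V * F * star V)
    (δ : ℝ) (hδ : 0 < δ) (hd : ∀ i j, p i → q j → δ ≤ |b j - a i|) :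
    (P * Q) * B - A * (P * Q) = P * (B - A) * Q ∧ δ * ‖P * Q‖ ≤ π / 2 * ‖B - A‖ := by
  have hU1' : ∀ X, star U * (U * X) = X := fun X => by rw [← mul_assoc, hU1, one_mul]
  have hV1' : ∀ X, star V * (V * X) = X := fun X => by rw [← mul_assoc, hV1, one_mul]
  have hU2' : ∀ X, U * (star U * X) = X := fun X => by rw [← mul_assoc, hU2, one_mul]
  have hV2' : ∀ X, V * (star V * X) = X := fun X => by rw [← mul_assoc, hV2, one_mul]
  have cE : DA * E = E * DA := by
    rw [hDA, hE, Matrix.diagonal_mul_diagonal, Matrix.diagonal_mul_diagonal]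
    congr 1; funext i; ring
  have cF : DB * F = F * DB := by
    rw [hDB, hF, Matrix.diagonal_mul_diagonal, Matrix.diagonal_mul_diagonal]
    congr 1; funext i; ring
  have cP : A * P = P * A := by
    rw [hA, hP]
    simp only [mul_assoc, hU1']
    rw [← mul_assoc DA, cE, mul_assoc]
  have cQ : B * Q = Q * B := by
    rw [hB, hQ]
    simp only [mul_assoc, hV1']
    rw [← mul_assoc DB, cF, mul_assoc]
  have h1 : (P * Q) * B - A * (P * Q) = P * (B - A) * Q := by
    rw [mul_sub, sub_mul, mul_assoc P Q B, ← cQ, ← mul_assoc A P Q, cP, mul_assoc P B Q]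
  refine ⟨h1, ?_⟩
  have nU : ‖U‖ ≤ 1 := norm_unitary_le U hU1
  have nV : ‖V‖ ≤ 1 := norm_unitary_le V hV1
  have nU' : ‖star U‖ ≤ 1 := by rw [norm_star]; exact nU
  have nV' : ‖star V‖ ≤ 1 := by rw [norm_star]; exact nV
  have nP : ‖P‖ ≤ 1 := by
    rw [hP]; exact (norm_triple_le _ _ _ nU nU').trans (hE ▸ norm_ind_le p)
  have nQ : ‖Q‖ ≤ 1 := by
    rw [hQ]; exact (norm_triple_le _ _ _ nV nV').trans (hF ▸ norm_ind_le q)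
  set W := star U * V with hW
  set Z := E * W * F with hZ
  have ePQ : P * Q = U * Z * star V := by
    rw [hP, hQ, hZ, hW]; simp only [mul_assoc]
  have eC : Z * DB - DA * Z = star U * (P * (B - A) * Q) * V := by
    rw [← h1, ePQ, hA, hB]
    simp only [mul_sub, sub_mul, mul_assoc, hU1', hV1', hV1, mul_one]
  have hs := sylvester_bound (Z * DB - DA * Z) Z a b δ hδ (by
    intro i j
    have e1 : Z i j = (if p i then (1 : ℂ) else 0) * W i j * (if q j then (1 : ℂ) else 0) := by
      rw [hZ, hE, hF, Matrix.mul_diagonal, Matrix.diagonal_mul]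
    have e2 : (Z * DB - DA * Z) i j = ((b j - a i : ℝ) : ℂ) * Z i j := by
      rw [Matrix.sub_apply, hDA, hDB, Matrix.mul_diagonal, Matrix.diagonal_mul]
      push_cast; ring
    by_cases hp : p i
    · by_cases hq : q j
      · exact Or.inr ⟨hd i j hp hq, e2⟩
      · left
        have : Z i j = 0 := by rw [e1, if_neg hq, mul_zero]
        exact ⟨this, by rw [e2, this, mul_zero]⟩
    · left
      have : Z i j = 0 := by rw [e1, if_neg hp, zero_mul, zero_mul]
      exact ⟨this, by rw [e2, this, mul_zero]⟩)
  have n1 : ‖P * Q‖ ≤ ‖Z‖ := by rw [ePQ]; exact norm_triple_le _ _ _ nU nV'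
  have n2 : ‖Z * DB - DA * Z‖ ≤ ‖B - A‖ := by
    rw [eC]; exact (norm_triple_le _ _ _ nU' nV).trans (norm_triple_le _ _ _ nP nQ)
  calc δ * ‖P * Q‖ ≤ δ * ‖Z‖ := by gcongr
    _ ≤ _ := hs
    _ ≤ _ := by gcongr

lemma final_bound {m : ℕ}
    {A B : Matrix (Fin m) (Fin m) ℂ} (hA : A.IsHermitian) (hB : B.IsHermitian)
    (ω Ω : Set ℝ) (δ : ℝ) (hδ : 0 < δ) (hdist : ∀ a ∈ ω, ∀ b ∈ Ω, δ ≤ |a - b|) :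
    (spectralProj hA ω * spectralProj hB Ω) * B - A * (spectralProj hA ω * spectralProj hB Ω)
        = spectralProj hA ω * (B - A) * spectralProj hB Ω ∧
      δ * ‖spectralProj hA ω * spectralProj hB Ω‖ ≤ π / 2 * ‖B - A‖ := by
  refine abstract_bound (hA.eigenvectorUnitary : Matrix (Fin m) (Fin m) ℂ)
    (hB.eigenvectorUnitary : Matrix (Fin m) (Fin m) ℂ) _ _ _ _ A B _ _ hA.eigenvalues hB.eigenvalues
    (fun i => hA.eigenvalues i ∈ ω) (fun i => hB.eigenvalues i ∈ Ω)
    (Unitary.coe_star_mul_self _) (Unitary.coe_mul_star_self _)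
    (Unitary.coe_star_mul_self _) (Unitary.coe_mul_star_self _) rfl rfl rfl rfl ?_ ?_ rfl rfl δ hδ ?_
  · have := hA.spectral_theorem
    rw [Unitary.conjStarAlgAut_apply] at this
    exact this
  · have := hB.spectral_theorem
    rw [Unitary.conjStarAlgAut_apply] at this
    exact this
  · intro i j hi hj
    rw [abs_sub_comm]
    exact hdist _ hi _ hj

end

/-- Let `A`, `B` be Hermitian matrices, `ω` a set of eigenvalues of `A`, `Ω` a set of
eigenvalues of `B` with `dist(ω, Ω) ≥ δ > 0`, and let `P`, `Q` be the spectral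
projections of `A`, `B` onto the eigenspaces corresponding to `ω`, `Ω`. Then
`X = PQ` solves the Sylvester equation `X B − A X = P (B − A) Q` (in full-space
form), and consequently `δ ‖PQ‖ ≤ (π/2) ‖B − A‖` (operator norms). -/
theorem spectral_proj_sylvester_bound {m : ℕ}
    {A B : Matrix (Fin m) (Fin m) ℂ} (hA : A.IsHermitian) (hB : B.IsHermitian)
    (ω Ω : Set ℝ) (hω : ω ⊆ Set.range hA.eigenvalues)
    (hΩ : Ω ⊆ Set.range hB.eigenvalues)
    (δ : ℝ) (hδ : 0 < δ) (hdist : ∀ a ∈ ω, ∀ b ∈ Ω, δ ≤ |a - b|) :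
    (spectralProj hA ω * spectralProj hB Ω) * B - A * (spectralProj hA ω * spectralProj hB Ω)
        = spectralProj hA ω * (B - A) * spectralProj hB Ω ∧
      δ * ‖Matrix.toEuclideanCLM (𝕜 := ℂ) (spectralProj hA ω * spectralProj hB Ω)‖
        ≤ π / 2 * ‖Matrix.toEuclideanCLM (𝕜 := ℂ) (B - A)‖ := by
  exact final_bound hA hB ω Ω δ hδ hdist
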